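/- arXiv:2409.11762 — 6 statements merged into one kernel-verified Lean document; each statement's English description precedes it below -/
import Mathlib

section
/- Let Γ be a group and let G be a gain graph over Γ. If every cycle of G is balanced, then every closed walk of G is balanced. -/
/-!
The gain of a walk does not change when `SimpleGraph.Walk.bypass` turns it into a path
(`walkGain_bypass`). Each closed subwalk that `bypass` cuts out consists of an edge `u v` followed
by a path from `v` back to `u`: either this is a cycle, balanced by hypothesis, or the path is the
edge `v u` itself, and the gains of the two opposite darts cancel (`walkGain_cons_path`). A path
from a vertex to itself is `nil`, so every closed walk has the gain of `nil`, the identity.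
-/

/-- The gain of a walk `v₀, v₁, …, v_k` in a gain graph with weights `a` over a group `Γ`:
the product `a_{v_{k-1} v_k} ⋯ a_{v_1 v_2} a_{v_0 v_1}`. -/
def walkGain {V : Type*} {Γ : Type*} [Group Γ] {G : SimpleGraph V} (a : V → V → Γ) :
    ∀ {u v : V}, G.Walk u v → Γ
  | _, _, SimpleGraph.Walk.nil => 1
  | _, _, SimpleGraph.Walk.cons (u := u) (v := v) _ p => walkGain a p * a u v

theorem walkGain_append {V : Type*} {Γ : Type*} [Group Γ] {G : SimpleGraph V} (a : V → V → Γ)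
    {u v w : V} (p : G.Walk u v) (q : G.Walk v w) :
    walkGain a (p.append q) = walkGain a q * walkGain a p := by
  induction p with
  | nil => simp [walkGain]
  | cons h p ih => simp [walkGain, ih, mul_assoc]

/-- A closed walk that is a path after its first step is balanced: it is either a cycle or an edge
traversed back and forth. -/
theorem walkGain_cons_path {V : Type*} {Γ : Type*} [Group Γ] {G : SimpleGraph V} (a : V → V → Γ)
    (hsymm : ∀ u v : V, G.Adj u v → a v u = (a u v)⁻¹)
    (hcycles : ∀ (v : V) (c : G.Walk v v), c.IsCycle → walkGain a c = 1)
    {u v : V} (h : G.Adj u v) (p : G.Walk v u) (hp : p.IsPath) :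
    walkGain a (SimpleGraph.Walk.cons h p) = 1 := by
  by_cases he : s(u, v) ∈ p.edges
  · rw [Sym2.eq_swap] at he
    rw [hp.eq_adj_toWalk_of_mem_edges he]
    simp [walkGain, hsymm u v h]
  · exact hcycles u _ ((SimpleGraph.Walk.cons_isCycle_iff p h).2 ⟨hp, he⟩)

theorem walkGain_bypass {V : Type*} [DecidableEq V] {Γ : Type*} [Group Γ] {G : SimpleGraph V}
    (a : V → V → Γ)
    (hsymm : ∀ u v : V, G.Adj u v → a v u = (a u v)⁻¹)
    (hcycles : ∀ (v : V) (c : G.Walk v v), c.IsCycle → walkGain a c = 1)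
    {u v : V} (p : G.Walk u v) : walkGain a p.bypass = walkGain a p := by
  induction p with
  | nil => rfl
  | @cons u v w h p ih =>
    simp only [SimpleGraph.Walk.bypass]
    split_ifs with hs
    · have hloop := walkGain_cons_path a hsymm hcycles h _ (p.bypass_isPath.takeUntil hs)
      have hsplit := walkGain_append a (p.bypass.takeUntil u hs) (p.bypass.dropUntil u hs)
      rw [SimpleGraph.Walk.take_spec, ih] at hsplit
      simp only [walkGain] at hloop ⊢
      rw [hsplit, mul_assoc, hloop, mul_one]
    · simp only [walkGain, ih]

/-- If every cycle of a gain graph is balanced, then every closed walk is balanced. -/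
theorem stmt_0 {V : Type*} {Γ : Type*} [Group Γ] (G : SimpleGraph V) (a : V → V → Γ)
    (hsymm : ∀ u v : V, G.Adj u v → a v u = (a u v)⁻¹)
    (hcycles : ∀ (v : V) (c : G.Walk v v), c.IsCycle → walkGain a c = 1) :
    ∀ (v : V) (w : G.Walk v v), walkGain a w = 1 := by
  classical
  intro v w
  rw [← walkGain_bypass a hsymm hcycles w,
    (SimpleGraph.Walk.isPath_iff_nil.1 w.bypass_isPath).eq_nil, walkGain]
end

section
/- Every simple graph that admits a proper vertex colouring with 5 colours admits a 2-edge-colouring with no monochromatic triangle. -/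
/-- Every simple graph with a proper vertex colouring with 5 colours has a
2-edge-colouring with no monochromatic triangle. -/
theorem stmt_3 {V : Type*} (G : SimpleGraph V) (hG : G.Colorable 5) :
    ∃ c : Sym2 V → Fin 2, ∀ u v w : V, G.Adj u v → G.Adj v w → G.Adj u w →
      ¬ (c s(u, v) = c s(v, w) ∧ c s(v, w) = c s(u, w)) := by
  obtain ⟨C⟩ := hG
  -- Pull back the colouring of `K₅` whose two colour classes are the pentagon and the
  -- pentagram: both are 5-cycles, hence triangle-free. Subtraction in `Fin 5` is modulo 5.
  let f : Fin 5 → Fin 5 → Fin 2 := fun a b => if a - b = 1 ∨ b - a = 1 then 1 else 0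
  have hf : ∀ a b, f a b = f b a := by decide
  have key : ∀ x y z : Fin 5, x ≠ y → y ≠ z → x ≠ z →
      ¬ (f x y = f y z ∧ f y z = f x z) := by decide
  refine ⟨fun e => Sym2.lift ⟨f, hf⟩ (e.map C), fun u v w huv hvw huw => ?_⟩
  exact key _ _ _ (C.valid huv) (C.valid hvw) (C.valid huw)
end

section
/- Every simple graph that admits a proper vertex colouring with 16 colours admits a 3-edge-colouring with no monochromatic triangle. -/
/-!
It suffices to colour the edges of the complete graph on 16 vertices and pull back along the proper
vertex colouring, which is injective on each triangle. Identify the 16 vertices with `𝔽₂⁴`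
(bit vectors of length 4 under xor) and give the edge `{x, y}` a colour depending only on `x + y`.
The three edges of a triangle then carry nonzero elements `a`, `b`, `a + b`, so it is enough that
the nonzero elements of `𝔽₂⁴` are partitioned into three sum-free sets (`sumClass_sumFree`).
This is the Greenwood–Gleason colouring.
-/

/-- The index of the part containing a nonzero element of `𝔽₂⁴` in a partition of the nonzero
elements into three sum-free sets of size 5, namely `{3, 8, 9, 12, 14}`, `{4, 5, 6, 10, 13}` and
`{1, 2, 7, 11, 15}` (bit vectors read as binary numerals). The value at zero is irrelevant. -/
def sumClass (x : BitVec 4) : Fin 3 :=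
  if x ∈ [3, 8, 9, 12, 14] then 0 else if x ∈ [4, 5, 6, 10, 13] then 1 else 2

theorem sumClass_sumFree : ∀ a b : BitVec 4, a ≠ 0 → b ≠ 0 → a ^^^ b ≠ 0 →
    ¬ (sumClass a = sumClass b ∧ sumClass b = sumClass (a ^^^ b)) := by
  decide

/-- Every simple graph with a proper vertex colouring with 16 colours has a
3-edge-colouring with no monochromatic triangle. -/
theorem stmt_4 {V : Type*} (G : SimpleGraph V) (hG : G.Colorable 16) :
    ∃ c : Sym2 V → Fin 3, ∀ u v w : V, G.Adj u v → G.Adj v w → G.Adj u w →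
      ¬ (c s(u, v) = c s(v, w) ∧ c s(v, w) = c s(u, w)) := by
  obtain ⟨C⟩ := hG
  let x : V → BitVec 4 := fun v => BitVec.ofFin (C v)
  have hx : ∀ u v, G.Adj u v → x u ^^^ x v ≠ 0 := fun u v h h0 =>
    C.valid h (congrArg BitVec.toFin (BitVec.xor_eq_zero_iff.mp h0))
  refine ⟨Sym2.lift ⟨fun u v => sumClass (x u ^^^ x v), fun _ _ =>
    congrArg sumClass (BitVec.xor_comm _ _)⟩, ?_⟩
  intro u v w huv hvw huw
  have key : (x u ^^^ x v) ^^^ (x v ^^^ x w) = x u ^^^ x w := by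
    rw [BitVec.xor_assoc, ← BitVec.xor_assoc (x v), BitVec.xor_self, BitVec.zero_xor]
  have h := sumClass_sumFree _ _ (hx u v huv) (hx v w hvw) (key ▸ hx u w huw)
  rw [key] at h
  exact h
end

section
/- Let k be a positive integer and let G be a simple graph that admits a proper vertex colouring with 2k colours. Then there exists an edge-colouring ψ of G with 2k−1 colours such that for every triangle of G, i.e. every three pairwise adjacent vertices u, v, w, the three colours ψ({u,v}), ψ({v,w}), ψ({u,w}) are pairwise distinct. -/
/-!
It suffices to edge-colour the complete graph on `2k` vertices properly with `2k - 1` colours and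
to pull this colouring back along a proper vertex colouring `G → K_{2k}`: a triangle of `G` maps
to a triangle of `K_{2k}`, whose edges pairwise share a vertex. Put `m = 2k - 1`, an odd number,
and use the round-robin colouring: an edge between vertices `a, b < m` gets the colour
`a + b` mod `m`, and the edge from `a < m` to the extra vertex `m` gets the colour `2a` mod `m`,
the one colour missing at `a`. Properness at the vertex `m` holds because `2` is invertible
modulo `m` (`roundRobin_injective`).
-/

/-- A natural number representing modulo `m` the round-robin colour of the edge `ab` of the
complete graph on `{0, …, m}`. The value at `a = b` is irrelevant. -/
def roundRobin (m a b : ℕ) : ℕ :=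
  if a = m then 2 * b else if b = m then 2 * a else a + b

lemma roundRobin_comm (m a b : ℕ) : roundRobin m a b = roundRobin m b a := by
  unfold roundRobin
  split_ifs <;> omega

lemma eq_or_eq_add_of_mod_eq {m x y : ℕ} (hx : x < 2 * m) (hy : y < 2 * m)
    (h : x % m = y % m) : x = y ∨ x = y + m ∨ y = x + m := by
  have reduce : ∀ z < 2 * m, z % m = z ∨ z % m + m = z := by
    intro z hz
    by_cases hzm : z < m
    · exact Or.inl (Nat.mod_eq_of_lt hzm)
    · rw [Nat.mod_eq_sub_mod (by omega), Nat.mod_eq_of_lt (by omega : z - m < m)]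
      omega
  have h₁ := reduce x hx
  have h₂ := reduce y hy
  omega

/-- Two different edges at a vertex `a` have different round-robin colours. -/
lemma roundRobin_injective {k m a b c : ℕ} (hm : m + 1 = 2 * k) (ha : a ≤ m) (hb : b ≤ m)
    (hc : c ≤ m) (hab : a ≠ b) (hac : a ≠ c)
    (h : roundRobin m a b % m = roundRobin m a c % m) : b = c := by
  have lt : ∀ d ≤ m, a ≠ d → roundRobin m a d < 2 * m := by
    intro d hd had
    unfold roundRobin
    split_ifs <;> omega
  have key := eq_or_eq_add_of_mod_eq (lt b hb hab) (lt c hc hac) h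
  unfold roundRobin at key
  split_ifs at key <;> omega

/-- Every simple graph with a proper vertex colouring with `2k` colours has an
edge-colouring with `2k - 1` colours in which the three edges of every triangle
receive pairwise distinct colours. -/
theorem stmt_5 {V : Type*} (k : ℕ) (hk : 0 < k)
    (G : SimpleGraph V) (hG : G.Colorable (2 * k)) :
    ∃ ψ : Sym2 V → Fin (2 * k - 1), ∀ u v w : V, G.Adj u v → G.Adj v w → G.Adj u w →
      ψ s(u, v) ≠ ψ s(v, w) ∧ ψ s(v, w) ≠ ψ s(u, w) ∧ ψ s(u, v) ≠ ψ s(u, w) := by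
  obtain ⟨C⟩ := hG
  let ψ : Sym2 V → Fin (2 * k - 1) := Sym2.lift
    ⟨fun u v => ⟨roundRobin (2 * k - 1) (C u) (C v) % (2 * k - 1), Nat.mod_lt _ (by omega)⟩,
      fun u v => by simp only [roundRobin_comm]⟩
  have proper : ∀ x y z : V, G.Adj x y → G.Adj x z → G.Adj y z → ψ s(x, y) ≠ ψ s(x, z) := by
    intro x y z hxy hxz hyz h
    have ne : ∀ {p q : V}, G.Adj p q → (C p : ℕ) ≠ C q :=
      fun hpq e => C.valid hpq (Fin.ext e)
    have le : ∀ p : V, (C p : ℕ) ≤ 2 * k - 1 := fun p => by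
      have := (C p).isLt
      omega
    exact ne hyz (roundRobin_injective (k := k) (by omega) (le x) (le y) (le z) (ne hxy) (ne hxz)
      (congrArg Fin.val h))
  refine ⟨ψ, fun u v w huv hvw huw => ⟨?_, ?_, proper u v w huv huw hvw⟩⟩
  · rw [Sym2.eq_swap (a := u)]
    exact proper v u w huv.symm hvw huw
  · rw [Sym2.eq_swap (a := v), Sym2.eq_swap (a := u)]
    exact proper w v u hvw.symm huw.symm huv.symm
end

section
/- For every colouring of the 3-element subsets of a 5-element set with 4 colours, there exist two distinct 3-element subsets that receive the same colour and whose intersection has exactly two elements. -/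
/-!
There are ten triples and four colours, so some colour class contains three distinct triples.
Two distinct triples not meeting in two points have disjoint complements (their union
is everything), and these complements are pairs; three pairwise disjoint pairs do not fit into a
5-element set. Hence two triples of that class meet in exactly two points.
-/

theorem disjoint_compl_of_card_inter_ne_two {s t : Finset (Fin 5)} (hs : s.card = 3)
    (ht : t.card = 3) (hst : s ≠ t) (h : (s ∩ t).card ≠ 2) : Disjoint sᶜ tᶜ := by
  have h_lt : (s ∩ t).card < 3 := by
    by_contra! h3
    have h1 := Finset.eq_of_subset_of_card_le (Finset.inter_subset_left (s₁ := s) (s₂ := t))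
      (by omega)
    have h2 := Finset.eq_of_subset_of_card_le (Finset.inter_subset_right (s₁ := s) (s₂ := t))
      (by omega)
    exact hst (h1.symm.trans h2)
  have h_add := Finset.card_union_add_card_inter s t
  have h_le := Finset.card_le_univ (s ∪ t)
  rw [Fintype.card_fin] at h_le
  have h_univ : s ∪ t = Finset.univ := by
    rw [← Finset.card_eq_iff_eq_univ, Fintype.card_fin]
    omega
  rw [Finset.disjoint_iff_inter_eq_empty, ← Finset.compl_union, h_univ, Finset.compl_univ]

/-- For every colouring of the 3-element subsets of a 5-element set with 4 colours there
are two distinct 3-element subsets with the same colour meeting in exactly two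
elements. -/
theorem stmt_7 (c : Finset (Fin 5) → Fin 4) :
    ∃ s t : Finset (Fin 5),
      s.card = 3 ∧ t.card = 3 ∧ s ≠ t ∧ (s ∩ t).card = 2 ∧ c s = c t := by
  have h_card : (Finset.powersetCard 3 (Finset.univ : Finset (Fin 5))).card = 10 := by
    rw [Finset.card_powersetCard, Finset.card_univ, Fintype.card_fin]
    rfl
  obtain ⟨k, -, hk⟩ := Finset.exists_lt_card_fiber_of_mul_lt_card_of_maps_to
    (s := Finset.powersetCard 3 (Finset.univ : Finset (Fin 5))) (t := Finset.univ) (f := c)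
    (n := 2) (fun _ _ => Finset.mem_univ _) (by simp [h_card])
  obtain ⟨s, t, u, hs, ht, hu, hst, hsu, htu⟩ := Finset.two_lt_card_iff.mp hk
  simp only [Finset.mem_filter, Finset.mem_powersetCard_univ] at hs ht hu
  by_contra! hc
  have d₁ := disjoint_compl_of_card_inter_ne_two hs.1 ht.1 hst
    fun h => hc s t hs.1 ht.1 hst h (hs.2.trans ht.2.symm)
  have d₂ := disjoint_compl_of_card_inter_ne_two hs.1 hu.1 hsu
    fun h => hc s u hs.1 hu.1 hsu h (hs.2.trans hu.2.symm)
  have d₃ := disjoint_compl_of_card_inter_ne_two ht.1 hu.1 htu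
    fun h => hc t u ht.1 hu.1 htu h (ht.2.trans hu.2.symm)
  have h_le := Finset.card_le_univ (sᶜ ∪ tᶜ ∪ uᶜ)
  rw [Finset.card_union_of_disjoint (Finset.disjoint_union_left.mpr ⟨d₂, d₃⟩),
    Finset.card_union_of_disjoint d₁, Finset.card_compl, Finset.card_compl, Finset.card_compl,
    hs.1, ht.1, hu.1, Fintype.card_fin] at h_le
  omega
end

section
/- Let ψ be a 2-edge-colouring of the complete graph on 5 vertices with no monochromatic triangle. Then for every vertex v and each of the two colours, the edges of that colour joining two of the four vertices distinct from v form a path with exactly three edges: there is an ordering a, b, c, d of the four vertices distinct from v such that the edges of that colour among these four vertices are exactly {a,b}, {b,c}, {c,d}. -/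
/-! Fix a vertex `v` and a colour. Three edges of one colour at `v` would force a
monochromatic triangle: two of the ends joined by that colour form one with `v`, and
otherwise the three ends form one in the other colour. Hence `v` has exactly two neighbours
`p, q` in the given colour and two neighbours `r, s` in the other (`exists_two_and_two`).
Now `pq` has the other colour and `rs` has the given one. The triangles `prs` and `qrs` show
that each of `p`, `q` sends at most one edge of the given colour to `{r, s}`; the triangles
`pqr` and `pqs` show that each of `r`, `s` receives at least one. So the given colour is a
perfect matching between `{p, q}` and `{r, s}`, and with `rs` it forms the path `p r s q` or
`p s r q`. -/

/-- The colouring has no monochromatic triangle, phrased relative to one colour: no triangle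
has all edges of that colour, and none avoids it, since only two colours are available. -/
theorem triangle_mixed {ψ : Sym2 (Fin 5) → Fin 2}
    (hψ : ∀ a b c : Fin 5, a ≠ b → b ≠ c → a ≠ c →
      ¬ (ψ s(a, b) = ψ s(b, c) ∧ ψ s(b, c) = ψ s(a, c)))
    (col : Fin 2) {a b c : Fin 5} (hab : a ≠ b) (hbc : b ≠ c) (hac : a ≠ c) :
    ¬ (ψ s(a, b) = col ∧ ψ s(b, c) = col ∧ ψ s(a, c) = col) ∧
    ¬ (ψ s(a, b) ≠ col ∧ ψ s(b, c) ≠ col ∧ ψ s(a, c) ≠ col) := by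
  have h := hψ a b c hab hbc hac
  constructor
  · rintro ⟨h1, h2, h3⟩
    exact h ⟨h1.trans h2.symm, h2.trans h3.symm⟩
  · rintro ⟨h1, h2, h3⟩
    exact h ⟨by omega, by omega⟩

theorem exists_two_and_two {ψ : Sym2 (Fin 5) → Fin 2}
    (hψ : ∀ a b c : Fin 5, a ≠ b → b ≠ c → a ≠ c →
      ¬ (ψ s(a, b) = ψ s(b, c) ∧ ψ s(b, c) = ψ s(a, c)))
    (v : Fin 5) (col : Fin 2) :
    ∃ p q r s : Fin 5, ([v, p, q, r, s] : List (Fin 5)).Nodup ∧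
      (∀ x, x ≠ v → x = p ∨ x = q ∨ x = r ∨ x = s) ∧
      ψ s(v, p) = col ∧ ψ s(v, q) = col ∧ ψ s(v, r) ≠ col ∧ ψ s(v, s) ≠ col := by
  set N : Finset (Fin 5) := Finset.univ.erase v with hN
  set A := N.filter (fun x => ψ s(v, x) = col) with hA
  set B := N.filter (fun x => ¬ ψ s(v, x) = col) with hB
  have hsum : A.card + B.card = 4 := by
    rw [hA, hB, Finset.card_filter_add_card_filter_not, hN]
    simp
  have hA2 : A.card ≤ 2 := by
    by_contra! h
    obtain ⟨x, hx, y, hy, z, hz, hxy, hxz, hyz⟩ := Finset.two_lt_card.1 h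
    simp only [hA, hN, Finset.mem_filter, Finset.mem_erase, Finset.mem_univ, and_true] at hx hy hz
    have h1 := (triangle_mixed hψ col hx.1.symm hxy hy.1.symm).1
    have h2 := (triangle_mixed hψ col hy.1.symm hyz hz.1.symm).1
    have h3 := (triangle_mixed hψ col hx.1.symm hxz hz.1.symm).1
    have h4 := (triangle_mixed hψ col hxy hyz hxz).2
    tauto
  have hB2 : B.card ≤ 2 := by
    by_contra! h
    obtain ⟨x, hx, y, hy, z, hz, hxy, hxz, hyz⟩ := Finset.two_lt_card.1 h
    simp only [hB, hN, Finset.mem_filter, Finset.mem_erase, Finset.mem_univ, and_true] at hx hy hz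
    have h1 := (triangle_mixed hψ col hx.1.symm hxy hy.1.symm).2
    have h2 := (triangle_mixed hψ col hy.1.symm hyz hz.1.symm).2
    have h3 := (triangle_mixed hψ col hx.1.symm hxz hz.1.symm).2
    have h4 := (triangle_mixed hψ col hxy hyz hxz).1
    tauto
  obtain ⟨p, q, hpq, hAe⟩ := Finset.card_eq_two.1 (show A.card = 2 by omega)
  obtain ⟨r, s, hrs, hBe⟩ := Finset.card_eq_two.1 (show B.card = 2 by omega)
  have mA : ∀ x, (x ≠ v ∧ ψ s(v, x) = col) ↔ (x = p ∨ x = q) := fun x => by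
    have : x ∈ A ↔ x ∈ ({p, q} : Finset (Fin 5)) := by rw [hAe]
    simpa [hA, hN] using this
  have mB : ∀ x, (x ≠ v ∧ ψ s(v, x) ≠ col) ↔ (x = r ∨ x = s) := fun x => by
    have : x ∈ B ↔ x ∈ ({r, s} : Finset (Fin 5)) := by rw [hBe]
    simpa [hB, hN] using this
  have hp := (mA p).2 (Or.inl rfl)
  have hq := (mA q).2 (Or.inr rfl)
  have hr := (mB r).2 (Or.inl rfl)
  have hs := (mB s).2 (Or.inr rfl)
  refine ⟨p, q, r, s, ?_, fun x hx => ?_, hp.2, hq.2, hr.2, hs.2⟩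
  · simp only [List.nodup_cons, List.mem_cons, List.not_mem_nil, or_false, not_or,
      not_false_eq_true, List.nodup_nil, and_true]
    grind
  · have := mA x
    have := mB x
    tauto

/-- If the six edges on `{a, b, c, d}` are coloured so that exactly `ab`, `bc`, `cd` have
colour `col`, the description by unordered pairs follows. -/
theorem path_of_colours {ψ : Sym2 (Fin 5) → Fin 2} {v a b c d : Fin 5} {col : Fin 2}
    (hn : ([v, a, b, c, d] : List (Fin 5)).Nodup)
    (hcov : ∀ x, x ≠ v → x = a ∨ x = b ∨ x = c ∨ x = d)
    (hab : ψ s(a, b) = col) (hbc : ψ s(b, c) = col) (hcd : ψ s(c, d) = col)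
    (hac : ψ s(a, c) ≠ col) (had : ψ s(a, d) ≠ col) (hbd : ψ s(b, d) ≠ col) :
    ∀ x y : Fin 5, x ≠ v → y ≠ v → x ≠ y →
      (ψ s(x, y) = col ↔ (s(x, y) = s(a, b) ∨ s(x, y) = s(b, c) ∨ s(x, y) = s(c, d))) := by
  intro x y hx hy hxy
  simp only [List.nodup_cons, List.mem_cons, List.not_mem_nil, or_false, not_or,
    not_false_eq_true, List.nodup_nil, and_true] at hn
  have e1 := Sym2.eq_swap (a := a) (b := b)
  have e2 := Sym2.eq_swap (a := b) (b := c)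
  have e3 := Sym2.eq_swap (a := c) (b := d)
  have e4 := Sym2.eq_swap (a := a) (b := c)
  have e5 := Sym2.eq_swap (a := a) (b := d)
  have e6 := Sym2.eq_swap (a := b) (b := d)
  simp only [Sym2.eq_iff]
  rcases hcov x hx with rfl | rfl | rfl | rfl <;>
    rcases hcov y hy with rfl | rfl | rfl | rfl <;> grind

/-- In a 2-edge-colouring of `K₅` with no monochromatic triangle, for every vertex `v`
and each colour, the edges of that colour among the four vertices distinct from `v`
form a path with exactly three edges. -/
theorem stmt_8 (ψ : Sym2 (Fin 5) → Fin 2)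
    (hψ : ∀ a b c : Fin 5, a ≠ b → b ≠ c → a ≠ c →
      ¬ (ψ s(a, b) = ψ s(b, c) ∧ ψ s(b, c) = ψ s(a, c))) :
    ∀ (v : Fin 5) (col : Fin 2), ∃ a b c d : Fin 5,
      ([v, a, b, c, d] : List (Fin 5)).Nodup ∧
      ∀ x y : Fin 5, x ≠ v → y ≠ v → x ≠ y →
        (ψ s(x, y) = col ↔ (s(x, y) = s(a, b) ∨ s(x, y) = s(b, c) ∨ s(x, y) = s(c, d))) := by
  intro v col
  obtain ⟨p, q, r, s, hn, hcov, hp, hq, hr, hs⟩ := exists_two_and_two hψ v col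
  have hn' := hn
  simp only [List.nodup_cons, List.mem_cons, List.not_mem_nil, or_false, not_or,
    not_false_eq_true, List.nodup_nil, and_true] at hn'
  obtain ⟨⟨vp, vq, vr, vs⟩, ⟨pq, pr, ps⟩, ⟨qr, qs⟩, rs⟩ := hn'
  have hpq : ψ s(p, q) ≠ col := fun h => (triangle_mixed hψ col vp pq vq).1 ⟨hp, h, hq⟩
  have hrs : ψ s(r, s) = col := by
    by_contra h
    exact (triangle_mixed hψ col vr rs vs).2 ⟨hr, h, hs⟩
  have tp := (triangle_mixed hψ col pr rs ps).1
  have tq := (triangle_mixed hψ col qr rs qs).1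
  have tr := (triangle_mixed hψ col pq qr pr).2
  have ts := (triangle_mixed hψ col pq qs ps).2
  by_cases hpr : ψ s(p, r) = col
  · have hps : ψ s(p, s) ≠ col := fun h => tp ⟨hpr, hrs, h⟩
    have hqs : ψ s(q, s) = col := by
      by_contra h
      exact ts ⟨hpq, h, hps⟩
    have hqr : ψ s(q, r) ≠ col := fun h => tq ⟨h, hrs, hqs⟩
    have hn2 : ([v, p, r, s, q] : List (Fin 5)).Nodup := by simp; grind
    refine ⟨p, r, s, q, hn2, path_of_colours hn2 (fun x hx => ?_) hpr hrs ?_ hps hpq ?_⟩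
    · rcases hcov x hx with h | h | h | h <;> simp [h]
    · rwa [Sym2.eq_swap]
    · rwa [Sym2.eq_swap]
  · have hqr : ψ s(q, r) = col := by
      by_contra h
      exact tr ⟨hpq, h, hpr⟩
    have hqs : ψ s(q, s) ≠ col := fun h => tq ⟨hqr, hrs, h⟩
    have hps : ψ s(p, s) = col := by
      by_contra h
      exact ts ⟨hpq, hqs, h⟩
    have hn2 : ([v, p, s, r, q] : List (Fin 5)).Nodup := by simp; grind
    refine ⟨p, s, r, q, hn2, path_of_colours hn2 (fun x hx => ?_) hps ?_ ?_ hpr hpq ?_⟩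
    · rcases hcov x hx with h | h | h | h <;> simp [h]
    · rwa [Sym2.eq_swap]
    · rwa [Sym2.eq_swap]
    · rwa [Sym2.eq_swap]
end
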